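/- The entire function Z₂(s) has no zero in the right half-plane Re(s) ≥ 20; that is, for every complex s with Re(s) ≥ 20 one has Z₂(s) ≠ 0. -/

import Mathlib

open Complex

noncomputable def chi (s : ℂ) : ℂ := s * (s - 1) * completedRiemannZeta₀ s + 1

noncomputable def A : ℂ := Real.pi / 3 - 1

noncomputable def f1 (s : ℂ) : ℂ :=
  (s - 1) * ((s - 1) * (3 * s - 2) * (A * s - A + 1) * chi (s + 1) * chi (3 * s)
    - (s + 1) * (s - 2) * chi s * chi (3 * s - 1)
    - 2 * (s - 1) * (s - 2) * chi s * chi (3 * s))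

noncomputable def f2 (s : ℂ) : ℂ :=
  (s - 2) * ((A * s + 3) * (s - 1) ^ 2 * chi (s + 2)
    - 2 * (s - 1) * (s - 3) * chi (s + 1)
    - (s + 2) * (s - 3) * chi s)

noncomputable def Z1 (s : ℂ) : ℂ := chi (2 * s) * f1 s - chi (2 * s - 1) * f1 (1 - s)

noncomputable def Z2 (s : ℂ) : ℂ := chi (2 * s) * f2 s - chi (2 * s - 1) * f2 (1 - s)


lemma beta_ref : betaIntegral 9 (1/2) = ((65536/109395 : ℝ) : ℂ) := by
  rw [betaIntegral_symm]
  have := betaIntegral_eval_nat_add_one_right (u := 1/2) (by norm_num) 8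
  norm_num [Finset.prod_range_succ, Nat.factorial] at this ⊢
  exact this

lemma beta_bound (u : ℂ) (hu : 9 ≤ u.re) : ‖betaIntegral u (1/2)‖ ≤ 3/5 := by
  have hI := betaIntegral_convergent (u := 9) (v := 1/2) (by norm_num) (by norm_num)
  have h1 : ∀ x : ℝ, x ∈ Set.Ioo (0:ℝ) 1 → ∀ w : ℂ,
      ‖(x : ℂ) ^ (w - 1) * (1 - (x : ℂ)) ^ ((1/2 : ℂ) - 1)‖
        = x ^ (w.re - 1) * (1 - x) ^ (-(1/2) : ℝ) := by
    intro x hx w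
    have h2 : (1 - (x:ℂ)) = ((1 - x : ℝ) : ℂ) := by push_cast; rfl
    rw [norm_mul, h2, norm_cpow_eq_rpow_re_of_pos hx.1,
      norm_cpow_eq_rpow_re_of_pos (by linarith [hx.2])]
    norm_num
  have h3 : (∫ x : ℝ in (0:ℝ)..1, ‖(x : ℂ) ^ ((9:ℂ) - 1) * (1 - (x : ℂ)) ^ ((1/2 : ℂ) - 1)‖)
      = 65536/109395 := by
    have h4 := beta_ref
    rw [betaIntegral] at h4
    apply Complex.ofReal_injective
    rw [← intervalIntegral.integral_ofReal]
    rw [← h4]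
    apply intervalIntegral.integral_congr_Ioo_of_le zero_le_one
    intro x hx
    have h2 : (1 - (x:ℂ)) = ((1 - x : ℝ) : ℂ) := by push_cast; rfl
    have h5 := h1 x hx 9
    simp only [h5]
    rw [ofReal_mul, ofReal_cpow hx.1.le, ofReal_cpow (by linarith [hx.2] : 0 ≤ 1 - x), h2]
    norm_num
  rw [betaIntegral]
  refine (intervalIntegral.norm_integral_le_of_norm_le (g := fun x : ℝ =>
    ‖(x : ℂ) ^ ((9:ℂ) - 1) * (1 - (x : ℂ)) ^ ((1/2 : ℂ) - 1)‖) zero_le_one ?_ hI.norm).trans ?_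
  · have : ∀ᵐ x : ℝ, x ≠ 1 := by simp [MeasureTheory.ae_iff]
    filter_upwards [this] with x hx1 hx
    have hx' : x ∈ Set.Ioo (0:ℝ) 1 := ⟨hx.1, lt_of_le_of_ne hx.2 hx1⟩
    rw [h1 x hx', h1 x hx']
    apply mul_le_mul_of_nonneg_right _ (Real.rpow_nonneg (by linarith [hx.2]) _)
    apply Real.rpow_le_rpow_of_exponent_ge hx'.1 hx'.2.le
    norm_num; linarith
  · rw [h3]; norm_num

lemma gamma_step (w : ℂ) (hw : 18 ≤ w.re) :
    ∃ c : ℂ, ‖c‖ ≤ 3/5 ∧ Gammaℝ w = c * Gammaℝ (w + 1) := by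
  refine ⟨betaIntegral (w/2) (1/2), beta_bound _ ?_, ?_⟩
  · have : (w/2).re = w.re/2 := by simp
    rw [this]; linarith
  · have h := Gamma_mul_Gamma_eq_betaIntegral (s := w/2) (t := 1/2)
      (by have : (w/2).re = w.re/2 := by simp
          rw [this]; linarith) (by norm_num)
    rw [Gamma_one_half_eq] at h
    have hpi : (Real.pi : ℂ) ≠ 0 := by exact_mod_cast Real.pi_ne_zero
    have e : (Real.pi : ℂ) ^ (-w/2) = (Real.pi:ℂ) ^ (-(w+1)/2) * (Real.pi : ℂ) ^ (1/2 : ℂ) := by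
      rw [← cpow_add _ _ hpi]; congr 1; ring
    rw [Gammaℝ_def, Gammaℝ_def, e, show (w+1)/2 = w/2 + 1/2 by ring]
    linear_combination (Real.pi:ℂ) ^ (-(w+1)/2) * h

lemma zeta_near (w : ℂ) (hw : 18 ≤ w.re) : ‖riemannZeta w - 1‖ ≤ 1/1000 := by
  have hs : Summable (fun n : ℕ => 1 / (n + 1 : ℂ) ^ w) := by
    have := (Complex.summable_one_div_nat_cpow (p := w)).2 (by linarith)
    simpa using (summable_nat_add_iff 1).2 this
  rw [zeta_eq_tsum_one_div_nat_add_one_cpow (by linarith), hs.tsum_eq_zero_add]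
  simp only [Nat.cast_zero, zero_add, one_cpow, div_one, add_sub_cancel_left]
  have hz : HasSum (fun n : ℕ => (1/2:ℝ)^16 * (1 / (n:ℝ)^2)) ((1/2:ℝ)^16 * (Real.pi^2/6)) :=
    hasSum_zeta_two.mul_left _
  have hz2 := (summable_nat_add_iff 2).2 hz.summable
  have hle : ∀ n : ℕ, ‖1 / (((n + 1 : ℕ) : ℂ) + 1) ^ w‖ ≤ (1/2:ℝ)^16 * (1 / ((n + 2 : ℕ):ℝ)^2) := by
    intro n
    have e : (((n + 1 : ℕ) : ℂ) + 1) = (((n + 2 : ℕ) : ℝ) : ℂ) := by push_cast; ring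
    have hp : (0:ℝ) < ((n + 2 : ℕ) : ℝ) := by positivity
    have h2 : (2:ℝ) ≤ ((n + 2 : ℕ) : ℝ) := by push_cast; linarith [Nat.cast_nonneg (α := ℝ) n]
    rw [e, norm_div, norm_one, norm_cpow_eq_rpow_re_of_pos hp]
    generalize ((n + 2 : ℕ) : ℝ) = y at *
    have h3 : y ^ (18:ℝ) ≤ y ^ w.re := Real.rpow_le_rpow_of_exponent_le (by linarith) hw
    have h4 : y ^ (18:ℝ) = y ^ 16 * y^2 := by
      rw [← pow_add]; exact_mod_cast Real.rpow_natCast y 18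
    have h5 : (2:ℝ)^16 ≤ y^16 := by gcongr
    have h6 : (2:ℝ)^16 * y^2 ≤ y ^ w.re := by
      rw [h4] at h3; exact le_trans (by gcongr) h3
    calc 1 / y ^ w.re ≤ 1 / ((2:ℝ)^16 * y^2) := by gcongr
      _ = _ := by field_simp
  refine (tsum_of_norm_bounded hz2.hasSum hle).trans ?_
  have h7 : ∑' n : ℕ, (1/2:ℝ)^16 * (1 / ((n + 2 : ℕ):ℝ)^2) ≤ (1/2:ℝ)^16 * (Real.pi^2/6) := by
    have := hz.summable.sum_add_tsum_nat_add 2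
    rw [hz.tsum_eq] at this
    have h8 : 0 ≤ ∑ i ∈ Finset.range 2, (1/2:ℝ)^16 * (1 / ((i:ℕ):ℝ)^2) := by positivity
    linarith
  have := Real.pi_lt_four
  have := Real.pi_pos
  nlinarith

lemma zeta_le (w : ℂ) (hw : 18 ≤ w.re) : ‖riemannZeta w‖ ≤ 1001/1000 := by
  have := norm_le_norm_add_norm_sub' (riemannZeta w) 1
  have h := zeta_near w hw
  rw [norm_one] at this; linarith
lemma zeta_ge (w : ℂ) (hw : 18 ≤ w.re) : 999/1000 ≤ ‖riemannZeta w‖ := by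
  have := norm_le_norm_add_norm_sub (riemannZeta w) 1
  have h := zeta_near w hw
  rw [norm_one] at this; linarith

lemma chi_eq (w : ℂ) (hw : 1 < w.re) : chi w = w * (w - 1) * Gammaℝ w * riemannZeta w := by
  have h0 : w ≠ 0 := by rintro rfl; norm_num at hw
  have h1 : w ≠ 1 := by rintro rfl; norm_num at hw
  have h2 : w - 1 ≠ 0 := sub_ne_zero.2 h1
  have h2' : 1 - w ≠ 0 := sub_ne_zero.2 h1.symm
  have hg : Gammaℝ w ≠ 0 := Gammaℝ_ne_zero_of_re_pos (by linarith)
  rw [riemannZeta_def_of_ne_zero h0, completedRiemannZeta_eq, chi]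
  field_simp
  ring

lemma chi_one_sub (w : ℂ) : chi (1 - w) = chi w := by
  rw [chi, chi, completedRiemannZeta₀_one_sub]; ring

lemma factor (s : ℂ) (hs : 20 ≤ s.re) : ∃ c1 c2 K : ℂ, ‖c1‖ ≤ 3/5 ∧ ‖c2‖ ≤ 3/5 ∧ K ≠ 0 ∧
    Z2 s = K * (s * (s - 2) * riemannZeta (2 * s) * ((A * s + 3) * (s - 1) * (s + 2) * (s + 1)
        * riemannZeta (s + 2) - 2 * (s - 3) * (s + 1) * s * c1 * riemannZeta (s + 1)
        - (s + 2) * (s - 3) * (2 * Real.pi) * riemannZeta s)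
      + c2 * riemannZeta (2 * s - 1) * (s + 1) * ((A + 3 - A * s) * s * (s - 3) * (4 * Real.pi ^ 2)
        * riemannZeta (s - 2) - 2 * s * (s + 2) * (s - 2) * (2 * Real.pi) * c1 * riemannZeta (s - 1)
        - (s - 3) * (s + 2) * (2 * Real.pi) * (s - 1) * riemannZeta s)) := by
  have hne : ∀ a : ℝ, a < 20 → s - a ≠ 0 := by
    intro a ha h
    have := congrArg re h
    simp at this; linarith
  have h0 : s ≠ 0 := by simpa using hne 0 (by norm_num)
  have h1 : s - 1 ≠ 0 := by simpa using hne 1 (by norm_num)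
  have h2 : s - 2 ≠ 0 := by simpa using hne 2 (by norm_num)
  have h3 : 2 * s - 1 ≠ 0 := by
    intro h
    apply hne (1/2) (by norm_num)
    push_cast; linear_combination h / 2
  have hpi : (Real.pi : ℂ) ≠ 0 := by exact_mod_cast Real.pi_ne_zero
  obtain ⟨c1, hc1, e1⟩ := gamma_step (s + 1) (by simp; linarith)
  obtain ⟨c2, hc2, e2⟩ := gamma_step (2 * s - 1) (by simp; linarith)
  rw [show s + 1 + 1 = s + 2 by ring] at e1
  rw [show 2 * s - 1 + 1 = 2 * s by ring] at e2
  have hG := Gammaℝ_add_two h0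
  have hH := Gammaℝ_add_two h2
  have hL := Gammaℝ_add_two h1
  rw [show s - 2 + 2 = s by ring] at hH
  rw [show s - 1 + 2 = s + 1 by ring] at hL
  have hM : Gammaℝ (s + 2) ≠ 0 := Gammaℝ_ne_zero_of_re_pos (by simp; linarith)
  have hQ : Gammaℝ (2 * s) ≠ 0 := Gammaℝ_ne_zero_of_re_pos (by simp; linarith)
  obtain ⟨N, hN⟩ : ∃ N, Gammaℝ (s + 2) = s * (s - 1) * (s - 2) * N :=
    ⟨Gammaℝ (s + 2) / (s * (s - 1) * (s - 2)), by field_simp⟩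
  have hN0 : N ≠ 0 := by rintro rfl; simp at hN; exact hM hN
  have g0 : Gammaℝ s = 2 * Real.pi * (s - 1) * (s - 2) * N := by
    rw [hN] at hG; field_simp at hG
    linear_combination -hG
  have gm2 : Gammaℝ (s - 2) = 4 * Real.pi ^ 2 * (s - 1) * N := by
    rw [g0] at hH; field_simp at hH
    linear_combination -hH
  have g1 : Gammaℝ (s + 1) = c1 * (s * (s - 1) * (s - 2) * N) := by rw [e1, hN]
  have gm1 : Gammaℝ (s - 1) = 2 * Real.pi * c1 * s * (s - 2) * N := by
    rw [g1] at hL; field_simp at hL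
    linear_combination -hL
  refine ⟨c1, c2, 2 * (2 * s - 1) * (s - 1) * Gammaℝ (2 * s) * N * s * (s - 1) * (s - 2),
    hc1, hc2, by simp only [ne_eq, mul_eq_zero, not_or]; simp [*], ?_⟩
  rw [Z2, f2, f2, show (1 - s + 2) = 1 - (s - 2) by ring, show (1 - s + 1) = 1 - (s - 1) by ring,
    chi_one_sub, chi_one_sub, chi_one_sub, chi_eq (2 * s) (by simp; linarith),
    chi_eq (2 * s - 1) (by simp; linarith), chi_eq (s + 2) (by simp; linarith),
    chi_eq (s + 1) (by simp; linarith), chi_eq s (by linarith),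
    chi_eq (s - 1) (by simp; linarith), chi_eq (s - 2) (by simp; linarith),
    e2, hN, g0, g1, gm1, gm2]
  ring

lemma shift_le (s : ℂ) (a b : ℝ) (h1 : |s.re - a| ≤ |s.re - b|) : ‖s - a‖ ≤ ‖s - b‖ := by
  rw [Complex.norm_def, Complex.norm_def]
  apply Real.sqrt_le_sqrt
  rw [normSq_apply, normSq_apply]
  have := sq_le_sq.2 h1
  simp
  nlinarith

lemma shift_ge (s : ℂ) (hs : 20 ≤ s.re) (a : ℝ) : 20 - a ≤ ‖s - a‖ := by
  have := Complex.re_le_norm (s - a)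
  simp at this; linarith

theorem Z2_no_zero_right (s : ℂ) (hs : 20 ≤ s.re) : Z2 s ≠ 0 := by
  obtain ⟨c1, c2, K, hc1, hc2, hK, hZ⟩ := factor s hs
  rw [hZ]
  refine mul_ne_zero hK ?_
  have p1 := Real.pi_gt_d4
  have p2 := Real.pi_lt_d4
  have hAr : A = ((Real.pi / 3 - 1 : ℝ) : ℂ) := by rw [A]; push_cast; rfl
  have hD : (39/10 : ℝ) ≤ ‖A * s + 3‖ := by
    have := Complex.re_le_norm (A * s + 3)
    rw [hAr] at this ⊢
    simp only [add_re, re_ofReal_mul, re_ofNat] at this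
    nlinarith
  have hD' : ‖A + 3 - A * s‖ ≤ ‖A * s + 3‖ := by
    rw [Complex.norm_def, Complex.norm_def]
    apply Real.sqrt_le_sqrt
    rw [normSq_apply, normSq_apply, hAr]
    generalize hα : Real.pi / 3 - 1 = α
    have hα0 : 0 < α := by linarith
    have : α < 1 := by linarith
    simp
    nlinarith [mul_nonneg (mul_nonneg hα0.le (by linarith : 0 ≤ 2 * s.re - 1)) (by linarith : 0 ≤ 6 + α)]
  have l31 : ‖s - 3‖ ≤ ‖s - 1‖ := by
    simpa using shift_le s 3 1 (by rw [abs_of_nonneg, abs_of_nonneg] <;> linarith)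
  have l32 : ‖s - 3‖ ≤ ‖s - 2‖ := by
    simpa using shift_le s 3 2 (by rw [abs_of_nonneg, abs_of_nonneg] <;> linarith)
  have l02 : ‖s‖ ≤ ‖s + 2‖ := by
    simpa using shift_le s 0 (-2) (by rw [abs_of_nonneg, abs_of_nonneg] <;> linarith)
  have g0 : 20 ≤ ‖s‖ := by simpa using shift_ge s hs 0
  have g1 : 19 ≤ ‖s - 1‖ := by have := shift_ge s hs 1; norm_num at this; exact this
  have g2 : 18 ≤ ‖s - 2‖ := by have := shift_ge s hs 2; norm_num at this; exact this
  have gp1 : 21 ≤ ‖s + 1‖ := by have := shift_ge s hs (-1); norm_num at this; exact this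
  have gp2 : 22 ≤ ‖s + 2‖ := by have := shift_ge s hs (-2); norm_num at this; exact this
  have z2s := zeta_le (2 * s) (by simp; linarith)
  have z2s' := zeta_ge (2 * s) (by simp; linarith)
  have zp2 := zeta_ge (s + 2) (by simp; linarith)
  have zp1 := zeta_le (s + 1) (by simp; linarith)
  have z0 := zeta_le s (by linarith)
  have z2m := zeta_le (2 * s - 1) (by simp; linarith)
  have zm2 := zeta_le (s - 2) (by simp; linarith)
  have zm1 := zeta_le (s - 1) (by simp; linarith)
  intro h
  set T1 := s * (s - 2) * riemannZeta (2 * s) * ((A * s + 3) * (s - 1) * (s + 2) * (s + 1)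
        * riemannZeta (s + 2)) with hT1
  set T2 := s * (s - 2) * riemannZeta (2 * s) * (2 * (s - 3) * (s + 1) * s * c1
        * riemannZeta (s + 1)) with hT2
  set T3 := s * (s - 2) * riemannZeta (2 * s) * ((s + 2) * (s - 3) * (2 * Real.pi)
        * riemannZeta s) with hT3
  set T6 := c2 * riemannZeta (2 * s - 1) * (s + 1) * ((A + 3 - A * s) * s * (s - 3)
        * (4 * Real.pi ^ 2) * riemannZeta (s - 2)) with hT6
  set T5 := c2 * riemannZeta (2 * s - 1) * (s + 1) * (2 * s * (s + 2) * (s - 2) * (2 * Real.pi) * c1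
        * riemannZeta (s - 1)) with hT5
  set T4 := c2 * riemannZeta (2 * s - 1) * (s + 1) * ((s - 3) * (s + 2) * (2 * Real.pi) * (s - 1)
        * riemannZeta s) with hT4
  have hT : T1 = T2 + T3 - T6 + T5 + T4 := by
    rw [hT1, hT2, hT3, hT4, hT5, hT6]; linear_combination h
  have hn : ‖T1‖ ≤ ‖T2‖ + ‖T3‖ + ‖T6‖ + ‖T5‖ + ‖T4‖ := by
    rw [hT]
    refine (norm_add_le _ _).trans ?_
    gcongr
    refine (norm_add_le _ _).trans ?_
    gcongr
    refine (norm_sub_le _ _).trans ?_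
    gcongr
    exact norm_add_le _ _
  have hpin : ‖(Real.pi : ℂ)‖ = Real.pi := by simp [Real.pi_pos.le]
  have hpi2 : Real.pi ^ 2 ≤ 10 := by nlinarith
  have hpi0 := Real.pi_pos
  clear_value T1 T2 T3 T4 T5 T6
  have n1 := congrArg norm hT1
  have n2 := congrArg norm hT2
  have n3 := congrArg norm hT3
  have n4 := congrArg norm hT4
  have n5 := congrArg norm hT5
  have n6 := congrArg norm hT6
  simp only [norm_mul, norm_pow, hpin, Complex.norm_ofNat] at n1 n2 n3 n4 n5 n6
  have q1 := norm_nonneg c1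
  have q2 := norm_nonneg c2
  have q3 := norm_nonneg (s - 3)
  have q4 := norm_nonneg (A + 3 - A * s)
  have y1 := norm_nonneg (riemannZeta (s + 1))
  have y2 := norm_nonneg (riemannZeta s)
  have y3 := norm_nonneg (riemannZeta (2 * s - 1))
  have y4 := norm_nonneg (riemannZeta (s - 1))
  have y5 := norm_nonneg (riemannZeta (s - 2))
  clear hT1 hT2 hT3 hT4 hT5 hT6 hT h hZ
  generalize ‖T1‖ = t1 at *
  generalize ‖T2‖ = t2 at *
  generalize ‖T3‖ = t3 at *
  generalize ‖T4‖ = t4 at *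
  generalize ‖T5‖ = t5 at *
  generalize ‖T6‖ = t6 at *
  generalize ‖riemannZeta (2 * s)‖ = ζ1 at *
  generalize ‖riemannZeta (s + 2)‖ = ζ2 at *
  generalize ‖riemannZeta (s + 1)‖ = ζ3 at *
  generalize ‖riemannZeta s‖ = ζ4 at *
  generalize ‖riemannZeta (2 * s - 1)‖ = ζ5 at *
  generalize ‖riemannZeta (s - 1)‖ = ζ6 at *
  generalize ‖riemannZeta (s - 2)‖ = ζ7 at *
  generalize ‖A * s + 3‖ = d at *
  generalize ‖A + 3 - A * s‖ = d' at *
  generalize ‖s - 3‖ = h at *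
  generalize ‖s - 2‖ = b at *
  generalize ‖s - 1‖ = e at *
  generalize ‖s + 1‖ = g at *
  generalize ‖s + 2‖ = f at *
  generalize ‖s‖ = a at *
  generalize ‖c1‖ = c at *
  generalize ‖c2‖ = c' at *
  have a0 : 0 < a := by linarith
  have b0 : 0 < b := by linarith
  have d0 : 0 < d := by linarith
  have e0 : 0 < e := by linarith
  have f0 : 0 < f := by linarith
  have gg0 : 0 < g := by linarith
  have ζ10 : 0 < ζ1 := by linarith
  have ζ20 : 0 < ζ2 := by linarith
  obtain ⟨P, hP⟩ : ∃ P, P = a * b * d * e * f * g := ⟨_, rfl⟩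
  have P0 : 0 < P := by rw [hP]; positivity
  have m1 : (99/100) * P ≤ t1 := by
    calc (99/100) * P ≤ (999/1000 * (999/1000)) * P := by gcongr; norm_num
      _ ≤ (ζ1 * ζ2) * P := by gcongr
      _ = t1 := by rw [n1, hP]; ring
  have m2 : t2 ≤ (32/100) * P := by
    calc t2 = a * b * ζ1 * (2 * h * g * a * c * ζ3) := n2
      _ ≤ a * b * (1001/1000) * (2 * e * g * f * (3/5) * (1001/1000)) := by gcongr
      _ = (a * b * e * f * g) * ((1001/1000) * 2 * (3/5) * (1001/1000)) := by ring
      _ ≤ (a * b * e * f * g) * ((32/100) * d) := mul_le_mul_of_nonneg_left (by linarith) (by positivity)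
      _ = _ := by rw [hP]; ring
  have m3 : t3 ≤ (8/100) * P := by
    calc t3 = a * b * ζ1 * (f * h * (2 * Real.pi) * ζ4) := n3
      _ ≤ a * b * (1001/1000) * (f * e * (2 * 3.1416) * (1001/1000)) := by gcongr
      _ = (a * b * e * f) * ((1001/1000) * (2 * 3.1416) * (1001/1000)) := by ring
      _ ≤ (a * b * e * f) * ((8/100) * (3.9 * 21)) := mul_le_mul_of_nonneg_left (by norm_num) (by positivity)
      _ ≤ (a * b * e * f) * ((8/100) * (d * g)) := by gcongr; linarith
      _ = _ := by rw [hP]; ring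
  have m6 : t6 ≤ (6/100) * P := by
    calc t6 = c' * ζ5 * g * (d' * a * h * (4 * Real.pi ^ 2) * ζ7) := n6
      _ ≤ (3/5) * (1001/1000) * g * (d * a * b * (4 * 10) * (1001/1000)) := by gcongr
      _ = (a * b * d * g) * ((1001/1000) * (3/5) * 40 * (1001/1000)) := by ring
      _ ≤ (a * b * d * g) * ((6/100) * (19 * 22)) := mul_le_mul_of_nonneg_left (by norm_num) (by positivity)
      _ ≤ (a * b * d * g) * ((6/100) * (e * f)) := by gcongr
      _ = _ := by rw [hP]; ring
  have m5 : t5 ≤ (10/100) * P := by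
    calc t5 = c' * ζ5 * g * (2 * a * f * b * (2 * Real.pi) * c * ζ6) := n5
      _ ≤ (3/5) * (1001/1000) * g * (2 * a * f * b * (2 * 3.1416) * (3/5) * (1001/1000)) := by gcongr
      _ = (a * b * f * g) * ((3/5) * (1001/1000) * (2 * (2 * 3.1416) * (3/5) * (1001/1000))) := by ring
      _ ≤ (a * b * f * g) * ((10/100) * (3.9 * 19)) := mul_le_mul_of_nonneg_left (by norm_num) (by positivity)
      _ ≤ (a * b * f * g) * ((10/100) * (d * e)) := by gcongr; linarith
      _ = _ := by rw [hP]; ring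
  have m4 : t4 ≤ (10/100) * P := by
    calc t4 = c' * ζ5 * g * (h * f * (2 * Real.pi) * e * ζ4) := n4
      _ ≤ (3/5) * (1001/1000) * g * (b * f * (2 * 3.1416) * e * (1001/1000)) := by gcongr
      _ = (b * e * f * g) * ((3/5) * (1001/1000) * ((2 * 3.1416) * (1001/1000))) := by ring
      _ ≤ (b * e * f * g) * ((10/100) * (3.9 * 20)) := mul_le_mul_of_nonneg_left (by norm_num) (by positivity)
      _ ≤ (b * e * f * g) * ((10/100) * (d * a)) := by gcongr; linarith
      _ = _ := by rw [hP]; ring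
  linarith
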